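/- Localization invariance: for any finite subset Z of the generic model M_n (n ≥ 3), the localized pregeometry PG_Z(M_n) is isomorphic to PG(M_n). -/

import Mathlib

/-!
The proof is a back-and-forth between `M` with the localized dimension `d(·/Z)` and `M` with the
dimension `d`. A state is a bijection `f : A → A'` between finite self-sufficient sets, `Z ⊆ A`,
such that `d(S/Z) = d(f S)` for all `S ⊆ A`.

*Extension.* Given a point `a`, choose a finite self-sufficient `B ⊇ A ∪ {a}`. Extend `A'` to a
structure `B'` on a copy of `B`, keeping the relations of `A'` and copying every tuple of `B` that
is not contained in `A` (`transfer`). Then `δ(T') - δ(T' ∩ A') = δ(T) - δ(T ∩ A)` for corresponding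
`T ⊆ B`, `T' ⊆ B'` (`pd_transfer`). As `A` is self-sufficient, this is nonnegative, so
`A' ≤ B' ∈ 𝒞`, and genericity realizes `B'` in `M` over `A'`. By submodularity, the dimension on
`B` is determined by the dimension on `A` and by the differences `δ(T) - δ(T ∩ A)`, hence the
extended bijection still respects the dimensions (`dm_le_of_pd_eq`). The situation is symmetric in
the two sides if one localizes at finite sets `P` and `Q` respectively, so the back step is the
forth step for `f⁻¹`.

*Start.* Let `A` be a finite self-sufficient set with `Z ⊆ A` and `δ(A) = d(Z)`; all of its subsets
have dimension `0` over `Z`. Let `A'` be a self-sufficient copy in `M` of the structure on `A` whose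
relations are the constant tuples; every subset of it has predimension `0`, hence
dimension `0` (`exists_start`).
-/

open Classical

/-- A relational structure for a language with relation symbols indexed by `I`,
where `R_i` has arity `ar i`, over a universe `U`.  The carrier may be infinite. -/
structure BigFS (I : Type) (ar : I → ℕ) (U : Type) where
  carrier : Set U
  rels : Set ((i : I) × (Fin (ar i) → U))
  mem_carrier : ∀ r ∈ rels, ∀ k, r.2 k ∈ carrier

namespace BigFS

variable {I U : Type} {ar : I → ℕ}

/-- The relation instances of `M` all of whose entries lie in `S`
(the relations of the induced substructure on `S`). -/
def relsIn (M : BigFS I ar U) (S : Set U) : Set ((i : I) × (Fin (ar i) → U)) :=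
  {r ∈ M.rels | ∀ k, r.2 k ∈ S}

/-- The predimension `δ(S) = |S| - Σ_i α_i |R_i^S|` of the induced substructure of `M`
on the finite set `S` (with weights `α`). -/
noncomputable def bdelta (α : I → ℕ) (M : BigFS I ar U) (S : Finset U) : ℤ :=
  (S.card : ℤ) - ∑ᶠ r ∈ M.relsIn ↑S, (α r.1 : ℤ)

/-- `M ∈ 𝒞̄_f`: every finite substructure has finitely many relation instances and
nonnegative predimension. -/
def inCbar (α : I → ℕ) (M : BigFS I ar U) : Prop :=
  ∀ S : Finset U, ↑S ⊆ M.carrier → (M.relsIn ↑S).Finite ∧ 0 ≤ bdelta α M S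

/-- The dimension `d_M(S) = min { δ(T) : S ⊆ T ⊆ M finite }`. -/
noncomputable def dim (α : I → ℕ) (M : BigFS I ar U) (S : Finset U) : ℤ :=
  sInf {z : ℤ | ∃ T : Finset U, S ⊆ T ∧ ↑T ⊆ M.carrier ∧ bdelta α M T = z}

/-- A finite subset `S` is self-sufficient in `M`: `δ(S) ≤ δ(T)` for all finite
`S ⊆ T ⊆ M`. -/
def ssIn (α : I → ℕ) (M : BigFS I ar U) (S : Finset U) : Prop :=
  ↑S ⊆ M.carrier ∧ ∀ T : Finset U, S ⊆ T → ↑T ⊆ M.carrier → bdelta α M S ≤ bdelta α M T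

/-- A (possibly infinite) subset `Z` is self-sufficient in `M`:
`δ(Z ∩ T) ≤ δ(T)` for every finite substructure `T` of `M`. -/
def ssSet (α : I → ℕ) (M : BigFS I ar U) (Z : Set U) : Prop :=
  Z ⊆ M.carrier ∧ ∀ T : Finset U, ↑T ⊆ M.carrier →
    bdelta α M (T.filter (fun x => x ∈ Z)) ≤ bdelta α M T

/-- The induced substructure of `M` on the set `Z`. -/
def inducedBig (M : BigFS I ar U) (Z : Set U) : BigFS I ar U :=
  ⟨M.carrier ∩ Z, M.relsIn Z, fun r hr k => ⟨M.mem_carrier r hr.1 k, hr.2 k⟩⟩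

/-- An embedding of `B` into `M` (as `L_f`-structures): injective on the carrier,
mapping into the carrier, preserving and reflecting all relations. -/
def IsEmb {V : Type} (B : BigFS I ar U) (M : BigFS I ar V) (g : U → V) : Prop :=
  Set.InjOn g B.carrier ∧ g '' B.carrier ⊆ M.carrier ∧
  ∀ r : (i : I) × (Fin (ar i) → U), (∀ k, r.2 k ∈ B.carrier) →
    (r ∈ B.rels ↔ (⟨r.1, g ∘ r.2⟩ : (i : I) × (Fin (ar i) → V)) ∈ M.rels)

/-- `M` is a (countable) generic structure for `(𝒞_f, ≤)`: all finite substructures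
lie in `𝒞_f` and `M` has the extension property: whenever `Z ≤ M`, `Z ≤ B ∈ 𝒞_f`
(with the same induced structure on `Z`), `B` embeds into `M` over `Z` with
self-sufficient image. -/
def IsGeneric (α : I → ℕ) (M : BigFS I ar U) : Prop :=
  M.carrier.Countable ∧ inCbar α M ∧
  ∀ B : BigFS I ar U, B.carrier.Finite → inCbar α B →
  ∀ Z : Set U, Z ⊆ B.carrier → ssSet α B Z → ssSet α M Z →
    inducedBig B Z = inducedBig M Z →
    ∃ g : U → U, IsEmb B M g ∧ (∀ a ∈ Z, g a = a) ∧ ssSet α M (g '' B.carrier)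

/-- The `d`-closure of a finite set `A` in `M`:
`{c ∈ M : d(A ∪ {c}) = d(A)}`. -/
noncomputable def cld (α : I → ℕ) (M : BigFS I ar U) (A : Finset U) : Set U :=
  {c | c ∈ M.carrier ∧ dim α M (insert c A) = dim α M A}

end BigFS

namespace BigFS

/-- Structures with a single `n`-ary relation. -/
abbrev Str (n : ℕ) (U : Type) := BigFS PUnit (fun _ => n) U

/-- The predimension `|S| - |R^S|`. -/
noncomputable abbrev pd {n : ℕ} {U : Type} (M : Str n U) (S : Finset U) : ℤ :=
  bdelta (fun _ => 1) M S

/-- The dimension attached to `pd`. -/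
noncomputable abbrev dm {n : ℕ} {U : Type} (M : Str n U) (S : Finset U) : ℤ :=
  dim (fun _ => 1) M S

variable {n : ℕ} {U : Type} {M : Str n U}

/-! ### Predimension, dimension and self-sufficient sets -/

lemma relsIn_finite (M : Str n U) (S : Finset U) : (M.relsIn ↑S).Finite := by
  refine ((Set.Finite.pi' (fun _ : Fin n => S.finite_toSet)).image
    (Sigma.mk (β := fun _ : PUnit => Fin n → U) PUnit.unit)).subset ?_
  rintro ⟨i, r⟩ ⟨_, hr⟩
  exact ⟨r, hr, rfl⟩

lemma pd_eq (M : Str n U) (S : Finset U) :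
    pd M S = (S.card : ℤ) - ((M.relsIn ↑S).ncard : ℤ) := by
  have hf := relsIn_finite M S
  unfold pd bdelta
  rw [finsum_mem_eq_finite_toFinset_sum _ hf, Set.ncard_eq_toFinset_card _ hf]
  simp

lemma pd_submod (M : Str n U) (S T : Finset U) :
    pd M (S ∪ T) + pd M (S ∩ T) ≤ pd M S + pd M T := by
  have h1 := Finset.card_union_add_card_inter S T
  have h2 := Set.ncard_union_add_ncard_inter (M.relsIn ↑S) (M.relsIn ↑T)
    (relsIn_finite M S) (relsIn_finite M T)
  have h3 : M.relsIn ↑S ∩ M.relsIn ↑T = M.relsIn ↑(S ∩ T) := by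
    ext r
    simp only [relsIn, Set.mem_inter_iff, Set.mem_ofPred_eq, Finset.coe_inter]
    exact ⟨fun h => ⟨h.1.1, fun k => ⟨h.1.2 k, h.2.2 k⟩⟩,
      fun h => ⟨⟨h.1, fun k => (h.2 k).1⟩, ⟨h.1, fun k => (h.2 k).2⟩⟩⟩
  have h4 : (M.relsIn ↑S ∪ M.relsIn ↑T).ncard ≤ (M.relsIn ↑(S ∪ T)).ncard := by
    refine Set.ncard_le_ncard ?_ (relsIn_finite M _)
    rintro r (h | h)
    · exact ⟨h.1, fun k => by simpa using Or.inl (h.2 k)⟩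
    · exact ⟨h.1, fun k => by simpa using Or.inr (h.2 k)⟩
  rw [h3] at h2
  simp only [pd_eq]
  omega

lemma dm_le (hM : inCbar (fun _ => 1) M) {S T : Finset U} (hST : S ⊆ T)
    (hT : ↑T ⊆ M.carrier) : dm M S ≤ pd M T :=
  csInf_le ⟨0, by rintro z ⟨T, -, hT, rfl⟩; exact (hM T hT).2⟩ ⟨T, hST, hT, rfl⟩

lemma exists_pd_eq_dm (hM : inCbar (fun _ => 1) M) {S : Finset U} (hS : ↑S ⊆ M.carrier) :
    ∃ T : Finset U, S ⊆ T ∧ ↑T ⊆ M.carrier ∧ pd M T = dm M S :=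
  Int.csInf_mem (s := {z : ℤ | ∃ T : Finset U, S ⊆ T ∧ (↑T : Set U) ⊆ M.carrier ∧ pd M T = z})
    ⟨_, S, subset_rfl, hS, rfl⟩
    ⟨0, by rintro z ⟨T, -, hT, rfl⟩; exact (hM T hT).2⟩

lemma dm_mono (hM : inCbar (fun _ => 1) M) {S T : Finset U} (hST : S ⊆ T)
    (hT : ↑T ⊆ M.carrier) : dm M S ≤ dm M T := by
  obtain ⟨C, hC, hCM, h⟩ := exists_pd_eq_dm hM hT
  rw [← h]
  exact dm_le hM (hST.trans hC) hCM

lemma ssSet_iff {A : Finset U} : ssSet (fun _ => 1) M ↑A ↔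
    ↑A ⊆ M.carrier ∧ ∀ T : Finset U, ↑T ⊆ M.carrier → pd M (T ∩ A) ≤ pd M T := by
  unfold ssSet
  have : ∀ (T : Finset U) (_ : DecidablePred fun x => x ∈ (↑A : Set U)),
      T.filter (fun x => x ∈ (↑A : Set U)) = T ∩ A := by
    intro T _; ext x; simp
  simp only [this]

/-- A finite superset of `S` of least predimension is self-sufficient, by submodularity. -/
lemma exists_ssSet (hM : inCbar (fun _ => 1) M) {S : Finset U} (hS : ↑S ⊆ M.carrier) :
    ∃ B : Finset U, S ⊆ B ∧ ssSet (fun _ => 1) M ↑B ∧ pd M B = dm M S := by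
  obtain ⟨B, hSB, hB, h⟩ := exists_pd_eq_dm hM hS
  refine ⟨B, hSB, ssSet_iff.2 ⟨hB, fun T hT => ?_⟩, h⟩
  have h1 := pd_submod M T B
  have h2 : dm M S ≤ pd M (T ∪ B) :=
    dm_le hM (hSB.trans Finset.subset_union_right) (by simp [hT, hB])
  omega

/-- Inside a self-sufficient set, the dimension is attained inside that set. -/
lemma exists_pd_eq_dm_of_ssSet (hM : inCbar (fun _ => 1) M) {A S : Finset U}
    (hA : ssSet (fun _ => 1) M ↑A) (hSA : S ⊆ A) :
    ∃ T : Finset U, S ⊆ T ∧ T ⊆ A ∧ pd M T = dm M S := by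
  obtain ⟨hAM, hA⟩ := ssSet_iff.1 hA
  have hSM : (↑S : Set U) ⊆ M.carrier := (Finset.coe_subset.2 hSA).trans hAM
  obtain ⟨T, hST, hT, h⟩ := exists_pd_eq_dm hM hSM
  have hs : S ⊆ T ∩ A := Finset.subset_inter hST hSA
  have h1 := hA T hT
  have h2 : dm M S ≤ pd M (T ∩ A) :=
    dm_le hM hs ((Finset.coe_subset.2 Finset.inter_subset_right).trans hAM)
  exact ⟨T ∩ A, hs, Finset.inter_subset_right, by omega⟩

lemma relsIn_empty (hn : 3 ≤ n) (M : Str n U) : M.relsIn ∅ = ∅ := by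
  ext r
  simp only [relsIn, Set.mem_ofPred_eq, Set.mem_empty_iff_false, iff_false, not_and, not_forall]
  exact fun _ => ⟨⟨0, by omega⟩, not_false⟩

lemma dm_empty (hn : 3 ≤ n) (hM : inCbar (fun _ => 1) M) : dm M ∅ = 0 := by
  obtain ⟨T, -, hT, h⟩ := exists_pd_eq_dm hM (S := ∅) (by simp)
  have h1 := dm_le hM (subset_refl (∅ : Finset U)) (by simp)
  have h2 : 0 ≤ pd M T := (hM T hT).2
  rw [pd_eq, Finset.coe_empty, relsIn_empty hn] at h1
  simp at h1
  omega

/-! ### Embeddings and bijections -/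

lemma pd_image_emb {N : Str n U} {g : U → U} (hg : IsEmb N M g) {T : Finset U}
    (hT : ↑T ⊆ N.carrier) : pd M (T.image g) = pd N T := by
  obtain ⟨hinj, himg, hrel⟩ := hg
  have hinjT : Set.InjOn g ↑T := hinj.mono hT
  have hE : M.relsIn ↑(T.image g) =
      (fun r : (_ : PUnit) × (Fin n → U) => (⟨r.1, g ∘ r.2⟩ : (_ : PUnit) × (Fin n → U))) ''
        N.relsIn ↑T := by
    ext ⟨i, r⟩
    constructor
    · rintro ⟨hr, hrT⟩
      have hk : ∀ k, ∃ x, x ∈ T ∧ g x = r k := fun k => by simpa using hrT k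
      choose s hs hgs using hk
      have hsr : g ∘ s = r := funext hgs
      refine ⟨⟨i, s⟩, ⟨(hrel ⟨i, s⟩ fun k => hT (hs k)).2 ?_, hs⟩, ?_⟩
      · simpa [hsr] using hr
      · simp [hsr]
    · rintro ⟨⟨j, s⟩, ⟨hs, hsT⟩, h⟩
      rw [← h]
      refine ⟨(hrel ⟨j, s⟩ fun k => hT (hsT k)).1 hs, fun k => ?_⟩
      simpa using ⟨s k, hsT k, rfl⟩
  rw [pd_eq, pd_eq, hE, Finset.card_image_of_injOn hinjT, Set.InjOn.ncard_image]
  rintro ⟨i, r⟩ ⟨_, hr⟩ ⟨j, s⟩ ⟨_, hs⟩ h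
  obtain rfl : i = j := rfl
  have h' : g ∘ r = g ∘ s := by simpa using h
  have : r = s := funext fun k => hinjT (hr k) (hs k) (congrFun h' k)
  rw [this]

lemma exists_perm_extend (A : Finset U) (f : U → U) (hf : Set.InjOn f ↑A) :
    ∃ h : Equiv.Perm U, ∀ a ∈ A, h a = f a := by
  let e : (↑A : Set U) ↪ U := ⟨fun x => f x, fun x y h => Subtype.ext (hf x.2 y.2 h)⟩
  rcases finite_or_infinite U with hU | hU
  · obtain ⟨h, hh⟩ := Cardinal.extend_function_finite e ⟨Equiv.refl U⟩
    exact ⟨h, fun a ha => hh ⟨a, ha⟩⟩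
  · obtain ⟨h, hh⟩ := Cardinal.extend_function_of_lt e
      ((Cardinal.lt_aleph0_of_finite _).trans_le (Cardinal.aleph0_le_mk U)) ⟨Equiv.refl U⟩
    exact ⟨h, fun a ha => hh ⟨a, ha⟩⟩

/-! ### Transferring an extension -/

/-- The structure on `h '' B` whose relations are those of `M` on `h '' A`, together with the
`h`-images of those relations of `M` on `B` that are not contained in `A`. -/
def transfer (M : Str n U) (A B : Finset U) (h : Equiv.Perm U) (hAB : A ⊆ B) : Str n U where
  carrier := ↑(B.image h)
  rels := M.relsIn ↑(A.image h) ∪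
    {r | (⟨r.1, h.symm ∘ r.2⟩ : (_ : PUnit) × (Fin n → U)) ∈ M.relsIn ↑B \ M.relsIn ↑A}
  mem_carrier := by
    rintro r (hr | hr) k
    · exact Finset.coe_subset.2 (Finset.image_subset_image hAB) (hr.2 k)
    · have := hr.1.2 k
      simpa using this

lemma relsIn_transfer_of_subset {A B T : Finset U} {h : Equiv.Perm U} (hAB : A ⊆ B) (hT : T ⊆ B) :
    (transfer M A B h hAB).relsIn ↑(T.image h) =
      M.relsIn ↑((T ∩ A).image h) ∪
      (fun r : (_ : PUnit) × (Fin n → U) => (⟨r.1, h ∘ r.2⟩ : (_ : PUnit) × (Fin n → U))) ''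
        (M.relsIn ↑T \ M.relsIn ↑(T ∩ A)) := by
  ext ⟨i, r⟩
  constructor
  · rintro ⟨hr | hr, hrT⟩
    · refine Or.inl ⟨hr.1, fun k => ?_⟩
      rw [Finset.image_inter _ _ h.injective, Finset.coe_inter]
      exact ⟨hrT k, hr.2 k⟩
    · refine Or.inr ⟨⟨i, h.symm ∘ r⟩, ⟨⟨hr.1.1, fun k => ?_⟩, fun hA => hr.2 ⟨hr.1.1, fun k => ?_⟩⟩,
        ?_⟩
      · obtain ⟨x, hx, hxr⟩ := Finset.mem_image.1 (Finset.mem_coe.1 (hrT k))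
        have hxr' : h.symm (r k) = x := (Equiv.symm_apply_eq h).2 hxr.symm
        change h.symm (r k) ∈ T
        rwa [hxr']
      · exact (Finset.mem_inter.1 (hA.2 k)).2
      · simp [← Function.comp_assoc]
  · rintro (hr | ⟨⟨j, s⟩, ⟨hs, hsA⟩, hsr⟩)
    · have hk : ∀ k, r k ∈ T.image h ∧ r k ∈ A.image h := fun k => by
        have := hr.2 k
        rwa [Finset.image_inter _ _ h.injective, Finset.mem_coe, Finset.mem_inter] at this
      exact ⟨Or.inl ⟨hr.1, fun k => (hk k).2⟩, fun k => (hk k).1⟩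
    · rw [← hsr]
      refine ⟨Or.inr ?_, fun k => Finset.mem_image_of_mem _ (hs.2 k)⟩
      have hc : h.symm ∘ h ∘ s = s := by simp [← Function.comp_assoc]
      simp only [Set.mem_ofPred_eq, hc]
      exact ⟨⟨hs.1, fun k => hT (hs.2 k)⟩,
        fun hA => hsA ⟨hs.1, fun k => Finset.mem_inter.2 ⟨hs.2 k, hA.2 k⟩⟩⟩

lemma pd_transfer {A B T : Finset U} {h : Equiv.Perm U} (hAB : A ⊆ B) (hT : T ⊆ B) :
    pd (transfer M A B h hAB) (T.image h) =
      pd M ((T ∩ A).image h) + pd M T - pd M (T ∩ A) := by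
  rw [pd_eq, pd_eq, pd_eq, pd_eq, relsIn_transfer_of_subset hAB hT, Set.ncard_union_eq _
    (relsIn_finite M _) (((relsIn_finite M T).sdiff).image _), Set.ncard_image_of_injective,
    Finset.card_image_of_injective _ h.injective, Finset.card_image_of_injective _ h.injective]
  · have hsub : M.relsIn ↑(T ∩ A) ⊆ M.relsIn ↑T :=
      fun r hr => ⟨hr.1, fun k => (Finset.mem_inter.1 (hr.2 k)).1⟩
    have := Set.ncard_sdiff_add_ncard_of_subset hsub (relsIn_finite M T)
    omega
  · rintro ⟨i, r⟩ ⟨j, s⟩ hrs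
    obtain rfl : i = j := rfl
    have h' : h ∘ r = h ∘ s := by simpa using hrs
    rw [h.injective.comp_left h']
  · rw [Set.disjoint_left]
    rintro _ hr ⟨⟨j, s⟩, ⟨hs, hsA⟩, rfl⟩
    refine hsA ⟨hs.1, fun k => ?_⟩
    obtain ⟨x, hx, hxs⟩ := Finset.mem_image.1 (Finset.mem_coe.1 (hr.2 k))
    rwa [← h.injective hxs]

/-- Comparison of localized dimensions. The common index set `B` is mapped to two finite sets by
`p` and `q`, in order that the roles of the two sides can be exchanged. If the dimensions agree
on `A ⊆ B` and the relative predimensions over `A` agree, then so do the dimensions on `B`; this is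
one of the two inequalities. -/
lemma dm_le_of_pd_eq (hM : inCbar (fun _ => 1) M) {A B P Q : Finset U} {p q : Equiv.Perm U}
    (hAB : A ⊆ B) (hpB : ssSet (fun _ => 1) M ↑(B.image p))
    (hqA : ssSet (fun _ => 1) M ↑(A.image q)) (hqB : ↑(B.image q) ⊆ M.carrier)
    (hP : P ⊆ A.image p) (hQ : Q ⊆ A.image q)
    (hd : ∀ S ⊆ A, dm M (S.image p ∪ P) - dm M P = dm M (S.image q ∪ Q) - dm M Q)
    (hδ : ∀ T ⊆ B, pd M (T.image p) - pd M ((T ∩ A).image p) =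
      pd M (T.image q) - pd M ((T ∩ A).image q)) :
    ∀ S ⊆ B, dm M (S.image q ∪ Q) - dm M Q ≤ dm M (S.image p ∪ P) - dm M P := by
  intro S hS
  obtain ⟨T', hT', hT'B, hTd⟩ := exists_pd_eq_dm_of_ssSet hM hpB
    (Finset.union_subset (Finset.image_subset_image (f := p) hS)
      (hP.trans (Finset.image_subset_image hAB)))
  obtain ⟨T, hTB, rfl⟩ := Finset.subset_image_iff.1 hT'B
  have hST : S ⊆ T :=
    (Finset.image_subset_image_iff p.injective).1 (Finset.subset_union_left.trans hT')
  have hPT : P ⊆ (T ∩ A).image p := by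
    rw [Finset.image_inter _ _ p.injective]
    exact Finset.subset_inter (Finset.subset_union_right.trans hT') hP
  obtain ⟨C', hC', hC'A, hCd⟩ := exists_pd_eq_dm_of_ssSet hM hqA
    (Finset.union_subset (Finset.image_subset_image (f := q)
      (Finset.inter_subset_right : T ∩ A ⊆ A)) hQ)
  obtain ⟨C, hCA, rfl⟩ := Finset.subset_image_iff.1 hC'A
  have hTC : T ∩ A ⊆ C :=
    (Finset.image_subset_image_iff q.injective).1 (Finset.subset_union_left.trans hC')
  have hTC' : T ∩ C = T ∩ A := by
    ext x
    simp only [Finset.mem_inter]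
    exact ⟨fun h => ⟨h.1, hCA h.2⟩, fun h => ⟨h.1, hTC (Finset.mem_inter.2 h)⟩⟩
  have h1 := hd (T ∩ A) Finset.inter_subset_right
  have h2 := hδ T hTB
  have hTAM : (↑((T ∩ A).image p) : Set U) ⊆ M.carrier :=
    (Finset.coe_subset.2 (Finset.image_subset_image (Finset.inter_subset_left.trans hTB))).trans
      hpB.1
  have h3 : dm M ((T ∩ A).image p ∪ P) ≤ pd M ((T ∩ A).image p) :=
    dm_le hM (Finset.union_subset subset_rfl hPT) hTAM
  have h4 := pd_submod M (T.image q) (C.image q)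
  rw [← Finset.image_inter _ _ q.injective, hTC', ← Finset.image_union] at h4
  have h5 : dm M (S.image q ∪ Q) ≤ pd M ((T ∪ C).image q) := by
    refine dm_le hM (Finset.union_subset ?_ ?_) ?_
    · exact Finset.image_subset_image (hST.trans Finset.subset_union_left)
    · exact (Finset.subset_union_right.trans hC').trans
        (Finset.image_subset_image Finset.subset_union_right)
    · exact (Finset.coe_subset.2 (Finset.image_subset_image
        (Finset.union_subset hTB (hCA.trans hAB)))).trans hqB
  omega

/-! ### The back-and-forth system -/

/-- A state of the back-and-forth: `h` restricts to a bijection from the self-sufficient set `A`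
to the self-sufficient set `h '' A`, carrying the dimension over `P` to the dimension over `Q`.
Only the values of `h` on `A` matter; taking `h` to be a permutation makes its inverse available. -/
structure Good (M : Str n U) (P Q A : Finset U) (h : Equiv.Perm U) : Prop where
  ss_dom : ssSet (fun _ => 1) M ↑A
  ss_ran : ssSet (fun _ => 1) M ↑(A.image h)
  left_sub : P ⊆ A
  right_sub : Q ⊆ A.image h
  dm_eq : ∀ S ⊆ A, dm M (S ∪ P) - dm M P = dm M (S.image h ∪ Q) - dm M Q

lemma Good.symm {P Q A : Finset U} {h : Equiv.Perm U} (H : Good M P Q A h) :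
    Good M Q P (A.image h) h.symm := by
  have hi : ∀ S : Finset U, (S.image h).image h.symm = S := fun S => by
    simp [Finset.image_image]
  refine ⟨H.ss_ran, by rw [hi]; exact H.ss_dom, H.right_sub, by rw [hi]; exact H.left_sub, ?_⟩
  intro S hS
  obtain ⟨S, hSA, rfl⟩ := Finset.subset_image_iff.1 hS
  rw [hi, H.dm_eq S hSA]

/-- The forth step. -/
lemma Good.extend (hM : IsGeneric (fun _ => 1) M) {P Q A : Finset U} {h : Equiv.Perm U}
    (H : Good M P Q A h) {a : U} (ha : a ∈ M.carrier) :
    ∃ (B : Finset U) (k : Equiv.Perm U), Good M P Q B k ∧ A ⊆ B ∧ (∀ x ∈ A, k x = h x) ∧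
      a ∈ B := by
  obtain ⟨-, hC, hext⟩ := hM
  have haA : (↑(insert a A) : Set U) ⊆ M.carrier := by
    rw [Finset.coe_insert]
    exact Set.insert_subset ha H.ss_dom.1
  obtain ⟨B, hB, hBss, -⟩ := exists_ssSet hC haA
  have hAB : A ⊆ B := (Finset.subset_insert _ _).trans hB
  have haB : a ∈ B := hB (Finset.mem_insert_self _ _)
  set N := transfer M A B h hAB with hN
  have hsub : ∀ T ⊆ B, pd M (T ∩ A) ≤ pd M T := fun T hT =>
    (ssSet_iff.1 H.ss_dom).2 T ((Finset.coe_subset.2 hT).trans hBss.1)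
  have hAM : ∀ T : Finset U, (↑((T ∩ A).image h) : Set U) ⊆ M.carrier := fun T =>
    (Finset.coe_subset.2 (Finset.image_subset_image Finset.inter_subset_right)).trans H.ss_ran.1
  have hNC : inCbar (fun _ => 1) N := by
    intro T' hT'
    refine ⟨relsIn_finite N T', ?_⟩
    obtain ⟨T, hT, rfl⟩ := Finset.subset_image_iff.1 (Finset.coe_subset.1 hT')
    have h1 := pd_transfer (M := M) (h := h) hAB hT
    have h2 := (hC _ (hAM T)).2
    have h3 := hsub T hT
    change 0 ≤ pd N (T.image h)
    rw [hN, h1]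
    change 0 ≤ pd M _ at h2
    omega
  have hAN : (↑(A.image h) : Set U) ⊆ N.carrier :=
    Finset.coe_subset.2 (Finset.image_subset_image hAB)
  have hNss : ssSet (fun _ => 1) N ↑(A.image h) := by
    refine ssSet_iff.2 ⟨hAN, ?_⟩
    intro T' hT'
    obtain ⟨T, hT, rfl⟩ := Finset.subset_image_iff.1 (Finset.coe_subset.1 hT')
    rw [← Finset.image_inter _ _ h.injective, hN, pd_transfer hAB hT,
      pd_transfer hAB (Finset.inter_subset_left.trans hT), Finset.inter_assoc, Finset.inter_self]
    have := hsub T hT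
    omega
  have hind : inducedBig N ↑(A.image h) = inducedBig M ↑(A.image h) := by
    have h1 : N.carrier ∩ ↑(A.image h) = M.carrier ∩ ↑(A.image h) := by
      rw [Set.inter_eq_right.2 hAN, Set.inter_eq_right.2 H.ss_ran.1]
    have h2 : N.relsIn ↑(A.image h) = M.relsIn ↑(A.image h) := by
      rw [hN, relsIn_transfer_of_subset hAB hAB, Finset.inter_self, Set.sdiff_self, Set.image_empty,
        Set.union_empty]
    simp only [inducedBig, h1, h2]
  obtain ⟨g, hg, hgA, hgss⟩ := hext N (Finset.finite_toSet _) hNC _ hAN hNss H.ss_ran hind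
  obtain ⟨k, hk⟩ := exists_perm_extend B (g ∘ h) (by
    intro x hx y hy hxy
    exact h.injective (hg.1 (Finset.mem_coe.2 (Finset.mem_image_of_mem _ hx))
      (Finset.mem_coe.2 (Finset.mem_image_of_mem _ hy)) hxy))
  have hkT : ∀ T ⊆ B, T.image k = (T.image h).image g := by
    intro T hT
    rw [Finset.image_image]
    exact Finset.image_congr fun x hx => hk x (hT hx)
  have hkA : ∀ x ∈ A, k x = h x := fun x hx => by
    rw [hk x (hAB hx)]
    exact hgA _ (Finset.mem_coe.2 (Finset.mem_image_of_mem _ hx))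
  have hkS : ∀ S ⊆ A, S.image k = S.image h := fun S hS =>
    Finset.image_congr fun x hx => hkA x (hS hx)
  have hkB : ssSet (fun _ => 1) M ↑(B.image k) := by
    rw [hkT B subset_rfl, Finset.coe_image]
    exact hgss
  have hδ : ∀ T ⊆ B, pd M T - pd M (T ∩ A) = pd M (T.image k) - pd M ((T ∩ A).image k) := by
    intro T hT
    rw [hkS _ Finset.inter_subset_right, hkT T hT,
      pd_image_emb hg (Finset.coe_subset.2 (Finset.image_subset_image hT)), hN,
      pd_transfer hAB hT]
    ring
  have hQ : Q ⊆ A.image k := by rw [hkS A subset_rfl]; exact H.right_sub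
  have hkAss : ssSet (fun _ => 1) M ↑(A.image k) := by rw [hkS A subset_rfl]; exact H.ss_ran
  have hd : ∀ S ⊆ A, dm M (S ∪ P) - dm M P = dm M (S.image k ∪ Q) - dm M Q := fun S hS => by
    rw [hkS S hS]; exact H.dm_eq S hS
  have hid : ∀ S : Finset U, S.image (Equiv.refl U) = S := fun S => by simp
  refine ⟨B, k, ⟨hBss, hkB, H.left_sub.trans hAB, hQ.trans (Finset.image_subset_image hAB),
    fun S hS => le_antisymm ?_ ?_⟩, hAB, hkA, haB⟩
  · have := dm_le_of_pd_eq hC (P := Q) (Q := P) (p := k) (q := Equiv.refl U) hAB hkB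
      (by rw [hid]; exact H.ss_dom) (by rw [hid]; exact hBss.1) hQ
      (by rw [hid]; exact H.left_sub)
      (fun S hS => by rw [hid]; exact (hd S hS).symm)
      (fun T hT => by rw [hid, hid]; exact (hδ T hT).symm) S hS
    rwa [hid] at this
  · have := dm_le_of_pd_eq hC (P := P) (Q := Q) (p := Equiv.refl U) (q := k) hAB
      (by rw [hid]; exact hBss) hkAss hkB.1 (by rw [hid]; exact H.left_sub) hQ
      (fun S hS => by rw [hid]; exact hd S hS)
      (fun T hT => by rw [hid, hid]; exact hδ T hT) S hS
    rwa [hid] at this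

/-- The structure on `A` whose relations are exactly the constant tuples. -/
def loops (n : ℕ) (A : Finset U) : Str n U where
  carrier := ↑A
  rels := (fun x => ⟨PUnit.unit, fun _ => x⟩) '' (↑A : Set U)
  mem_carrier := by
    rintro _ ⟨x, hx, rfl⟩ k
    exact hx

lemma pd_loops (hn : 3 ≤ n) {A T : Finset U} (hT : T ⊆ A) : pd (loops n A) T = 0 := by
  have hn0 : 0 < n := by omega
  have hE : (loops n A).relsIn ↑T =
      (fun x => (⟨PUnit.unit, fun _ => x⟩ : (_ : PUnit) × (Fin n → U))) '' (↑T : Set U) := by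
    ext r
    constructor
    · rintro ⟨⟨x, hx, rfl⟩, hxT⟩
      -- a constant tuple lies in `T` only if its entry does, because the arity is positive
      exact ⟨x, hxT ⟨0, hn0⟩, rfl⟩
    · rintro ⟨x, hx, rfl⟩
      exact ⟨⟨x, hT hx, rfl⟩, fun _ => hx⟩
  rw [pd_eq, hE, Set.ncard_image_of_injective, Set.ncard_coe_finset, sub_self]
  intro x y hxy
  have h' : (fun _ : Fin n => x) = fun _ => y := by simpa using hxy
  exact congrFun h' ⟨0, hn0⟩

lemma exists_start (hn : 3 ≤ n) (hM : IsGeneric (fun _ => 1) M) {Z : Finset U}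
    (hZ : ↑Z ⊆ M.carrier) : ∃ (A : Finset U) (h : Equiv.Perm U), Good M Z ∅ A h := by
  obtain ⟨-, hC, hext⟩ := hM
  obtain ⟨A, hZA, hA, hAZ⟩ := exists_ssSet hC hZ
  have hss : ∀ N : Str n U, inCbar (fun _ => 1) N → ssSet (fun _ => 1) N ∅ := by
    intro N hN
    rw [← Finset.coe_empty, ssSet_iff]
    refine ⟨by simp, fun T hT => ?_⟩
    rw [Finset.inter_empty, pd_eq, Finset.coe_empty, relsIn_empty hn]
    simpa using (hN T hT).2
  have hLC : inCbar (fun _ => 1) (loops n A) := fun T hT =>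
    ⟨relsIn_finite _ T, (pd_loops hn (Finset.coe_subset.1 hT)).ge⟩
  obtain ⟨g, hg, -, hgss⟩ := hext (loops n A) (Finset.finite_toSet _) hLC ∅ (Set.empty_subset _)
    (hss _ hLC) (hss _ hC) (by simp only [inducedBig, relsIn_empty hn, Set.inter_empty])
  obtain ⟨h, hh⟩ := exists_perm_extend A g hg.1
  have hhS : ∀ S ⊆ A, S.image h = S.image g := fun S hS =>
    Finset.image_congr fun x hx => hh x (hS hx)
  have hran : ssSet (fun _ => 1) M ↑(A.image h) := by
    rw [hhS A subset_rfl, Finset.coe_image]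
    exact hgss
  refine ⟨A, h, hA, hran, hZA, Finset.empty_subset _, fun S hS => ?_⟩
  have h1 : dm M (S ∪ Z) ≤ pd M A := dm_le hC (Finset.union_subset hS hZA) hA.1
  have h2 : dm M Z ≤ dm M (S ∪ Z) := dm_mono hC Finset.subset_union_right
    ((Finset.coe_subset.2 (Finset.union_subset hS hZA)).trans hA.1)
  have hSM : (↑(S.image h) : Set U) ⊆ M.carrier :=
    (Finset.coe_subset.2 (Finset.image_subset_image hS)).trans hran.1
  have h3 : dm M (S.image h) ≤ pd M (S.image h) := dm_le hC subset_rfl hSM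
  have h4 : dm M ∅ ≤ dm M (S.image h) := dm_mono hC (Finset.empty_subset _) hSM
  have h5 : pd M (S.image h) = 0 := by
    rw [hhS S hS, pd_image_emb hg (Finset.coe_subset.2 hS), pd_loops hn hS]
  rw [dm_empty hn hC] at h4 ⊢
  rw [Finset.union_empty]
  omega

/-- States, preordered by extension of the finite bijections. -/
structure State (M : Str n U) (P Q : Finset U) where
  dom : Finset U
  map : Equiv.Perm U
  good : Good M P Q dom map

instance (P Q : Finset U) : Preorder (State M P Q) where
  le s t := s.dom ⊆ t.dom ∧ ∀ x ∈ s.dom, t.map x = s.map x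
  le_refl s := ⟨subset_rfl, fun _ _ => rfl⟩
  le_trans s t u hst htu :=
    ⟨hst.1.trans htu.1, fun x hx => (htu.2 x (hst.1 hx)).trans (hst.2 x hx)⟩

lemma State.forth (hM : IsGeneric (fun _ => 1) M) {P Q : Finset U} (s : State M P Q) {a : U}
    (ha : a ∈ M.carrier) : ∃ t : State M P Q, a ∈ t.dom ∧ s ≤ t := by
  obtain ⟨B, k, hB, hsub, hk, haB⟩ := s.good.extend hM ha
  exact ⟨⟨B, k, hB⟩, haB, hsub, hk⟩

lemma State.back (hM : IsGeneric (fun _ => 1) M) {P Q : Finset U} (s : State M P Q) {b : U}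
    (hb : b ∈ M.carrier) : ∃ t : State M P Q, b ∈ t.dom.image t.map ∧ s ≤ t := by
  obtain ⟨B, k, hB, hsub, hk, hbB⟩ := s.good.symm.extend hM hb
  have hkx : ∀ x ∈ s.dom, k (s.map x) = x := fun x hx => by
    rw [hk _ (Finset.mem_image_of_mem _ hx), Equiv.symm_apply_apply]
  refine ⟨⟨B.image k, k.symm, hB.symm⟩, ?_, ?_, ?_⟩
  · simpa [Finset.image_image] using hbB
  · intro x hx
    rw [← hkx x hx]
    exact Finset.mem_image_of_mem _ (hsub (Finset.mem_image_of_mem _ hx))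
  · intro x hx
    change k.symm x = s.map x
    rw [Equiv.symm_apply_eq, hkx x hx]

end BigFS

open BigFS
/-- localization invariance: for any finite `Z ⊆ M_n` (`n ≥ 3`),
the localized pregeometry `PG_Z(M_n)` is isomorphic to `PG(M_n)`: there is a
bijection of the carrier carrying the dimension `d` to the localized dimension
`d(· ∪ Z) − d(Z)`. -/
theorem localization_invariance {U : Type} (n : ℕ) (hn : 3 ≤ n)
    (Mn : BigFS PUnit (fun _ => n) U) (hMn : IsGeneric (fun _ => 1) Mn)
    (Z : Finset U) (hZ : ↑Z ⊆ Mn.carrier) :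
    ∃ g : U → U, Set.BijOn g Mn.carrier Mn.carrier ∧
      ∀ S : Finset U, ↑S ⊆ Mn.carrier →
        dim (fun _ => 1) Mn (S.image g) =
          dim (fun _ => 1) Mn (S ∪ Z) - dim (fun _ => 1) Mn Z := by
  obtain ⟨A₀, h₀, H₀⟩ := exists_start hn hMn hZ
  have : Countable Mn.carrier := hMn.1.to_subtype
  let _ : Encodable (Mn.carrier ⊕ Mn.carrier) := Encodable.ofCountable _
  let D : Mn.carrier ⊕ Mn.carrier → Order.Cofinal (State Mn Z ∅) := Sum.elim
    (fun a => ⟨{t | (a : U) ∈ t.dom}, fun s => s.forth hMn a.2⟩)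
    (fun b => ⟨{t | (b : U) ∈ t.dom.image t.map}, fun s => s.back hMn b.2⟩)
  let I := Order.idealOfCofinals (⟨A₀, h₀, H₀⟩ : State Mn Z ∅) D
  have hdom : ∀ a ∈ Mn.carrier, ∃ s ∈ I, a ∈ s.dom := fun a ha => by
    obtain ⟨s, hs, hsI⟩ := Order.cofinal_meets_idealOfCofinals
      (⟨A₀, h₀, H₀⟩ : State Mn Z ∅) D (Sum.inl ⟨a, ha⟩)
    exact ⟨s, hsI, hs⟩
  have hran : ∀ b ∈ Mn.carrier, ∃ s ∈ I, b ∈ s.dom.image s.map := fun b hb => by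
    obtain ⟨s, hs, hsI⟩ := Order.cofinal_meets_idealOfCofinals
      (⟨A₀, h₀, H₀⟩ : State Mn Z ∅) D (Sum.inr ⟨b, hb⟩)
    exact ⟨s, hsI, hs⟩
  -- `g` is the union of the finite bijections in the ideal `I`
  have hval : ∀ a : U, ∃ y : U, ∀ s ∈ I, a ∈ s.dom → s.map a = y := by
    intro a
    by_cases ha : ∃ s ∈ I, a ∈ s.dom
    · obtain ⟨s, hs, has⟩ := ha
      refine ⟨s.map a, fun t ht hat => ?_⟩
      obtain ⟨u, -, hsu, htu⟩ := I.directed s hs t ht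
      rw [← hsu.2 a has, ← htu.2 a hat]
    · exact ⟨a, fun s hs has => absurd ⟨s, hs, has⟩ ha⟩
  choose g hg using hval
  have hfin : ∀ S : Finset U, ↑S ⊆ Mn.carrier → ∃ s ∈ I, S ⊆ s.dom := by
    intro S
    induction S using Finset.induction_on with
    | empty => exact fun _ => ⟨_, I.nonempty.some_mem, Finset.empty_subset _⟩
    | insert a S _ ih =>
      intro hS
      rw [Finset.coe_insert, Set.insert_subset_iff] at hS
      obtain ⟨s, hs, hSs⟩ := ih hS.2
      obtain ⟨t, ht, hat⟩ := hdom a hS.1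
      obtain ⟨u, hu, hsu, htu⟩ := I.directed s hs t ht
      exact ⟨u, hu, Finset.insert_subset (htu.1 hat) (hSs.trans hsu.1)⟩
  refine ⟨g, ⟨?_, ?_, ?_⟩, ?_⟩
  · intro a ha
    obtain ⟨s, hs, has⟩ := hdom a ha
    rw [← hg a s hs has]
    exact s.good.ss_ran.1 (Finset.mem_coe.2 (Finset.mem_image_of_mem _ has))
  · intro a ha b hb hab
    obtain ⟨s, hs, hsub⟩ := hfin {a, b} (by
      rw [Finset.coe_pair]
      exact Set.insert_subset ha (Set.singleton_subset_iff.2 hb))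
    rw [← hg a s hs (hsub (by simp)), ← hg b s hs (hsub (by simp))] at hab
    exact s.map.injective hab
  · intro b hb
    obtain ⟨s, hs, hbs⟩ := hran b hb
    obtain ⟨a, ha, rfl⟩ := Finset.mem_image.1 hbs
    exact ⟨a, s.good.ss_dom.1 ha, (hg a s hs ha).symm⟩
  · intro S hS
    obtain ⟨s, hs, hSs⟩ := hfin S hS
    have himg : S.image g = S.image s.map :=
      Finset.image_congr fun x hx => (hg x s hs (hSs hx)).symm
    have h1 := s.good.dm_eq S hSs
    have h2 := dm_empty hn hMn.2.1
    rw [Finset.union_empty, h2, sub_zero] at h1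
    rw [himg]
    exact h1.symm
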